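/- arXiv:2604.20097 — 2 statements merged into one kernel-verified Lean document; each statement's English description precedes it below -/
import Mathlib

section
/- Let G1 and G2 be finite simple graphs, each with at least one vertex. Then car(G1 ∪ G2) = max{car(G1), car(G2)}, where G1 ∪ G2 denotes the disjoint union of G1 and G2. -/
open SimpleGraph

/-- A set `S` is cycle convex in `G` if no vertex `w` outside `S` is such that the
subgraph induced by `S ∪ {w}` contains a cycle through `w`. -/
def IsCycleConvex {V : Type*} (G : SimpleGraph V) (S : Set V) : Prop :=
  ∀ w : V, w ∉ S →
    ¬ ∃ c : (G.induce (S ∪ {w})).Walk ⟨w, Set.mem_union_right S rfl⟩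
        ⟨w, Set.mem_union_right S rfl⟩, c.IsCycle

/-- The cycle convex hull of `S`: the smallest cycle convex set containing `S`. -/
def cycleHull {V : Type*} (G : SimpleGraph V) (S : Set V) : Set V :=
  ⋂₀ {T : Set V | S ⊆ T ∧ IsCycleConvex G T}

/-- `S` is Carathéodory independent in the cycle convexity of `G`. -/
def CIndep {V : Type*} (G : SimpleGraph V) (S : Set V) : Prop :=
  ∃ p ∈ cycleHull G S, ∀ a ∈ S, p ∉ cycleHull G (S \ {a})

/-- The Carathéodory number of `G` in the cycle convexity. -/
noncomputable def carNumber {V : Type*} (G : SimpleGraph V) : ℕ :=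
  sSup {n : ℕ | ∃ S : Set V, CIndep G S ∧ S.ncard = n}

/-- Cycle convexity phrased with closed walks of `G` itself rather than of an induced subgraph. -/
theorem isCycleConvex_iff {V : Type*} (G : SimpleGraph V) (S : Set V) :
    IsCycleConvex G S ↔ ∀ (w : V) (c : G.Walk w w), c.IsCycle →
      (∀ v ∈ c.support, v ∈ S ∪ {w}) → w ∈ S := by
  constructor
  · intro h w c hc hs
    by_contra hw
    refine h w hw ⟨c.induce _ hs, ?_⟩
    have hmap : ((c.induce _ hs).map (Embedding.induce (S ∪ {w})).toHom).IsCycle :=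
      (congrArg Walk.IsCycle (c.map_induce hs)).mpr hc
    exact (Walk.isCycle_map_iff_of_injective Subtype.val_injective).1 hmap
  · rintro h w hw ⟨c, hc⟩
    refine hw (h w (c.map (Embedding.induce (S ∪ {w})).toHom)
      (hc.map Subtype.val_injective) ?_)
    intro v hv
    obtain ⟨x, -, rfl⟩ := List.mem_map.1 ((Walk.support_map _ c) ▸ hv)
    exact x.2

section ClosedEmbedding

variable {V W : Type*} {G : SimpleGraph V} {K : SimpleGraph W} (f : G ↪g K)

/-- A walk starting in a union of components embedded by `f` lifts along `f`. -/
theorem exists_walk_map_eq (hf : ∀ u y, K.Adj (f u) y → y ∈ Set.range f) {x y : W}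
    (c : K.Walk x y) : ∀ u (hu : f u = x),
      ∃ (v : V) (hv : f v = y) (c' : G.Walk u v), (c'.map f.toHom).copy hu hv = c := by
  induction c with
  | nil =>
    rintro u rfl
    exact ⟨u, rfl, Walk.nil, rfl⟩
  | cons h c ih =>
    rintro u rfl
    obtain ⟨z, rfl⟩ := hf u _ h
    obtain ⟨v, rfl, c', rfl⟩ := ih z rfl
    exact ⟨v, rfl, Walk.cons (f.map_adj_iff.1 h) c', rfl⟩

theorem IsCycleConvex.preimage {T : Set W} (hT : IsCycleConvex K T) :
    IsCycleConvex G (f ⁻¹' T) := by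
  rw [isCycleConvex_iff] at hT ⊢
  intro w c hc hs
  refine hT (f w) (c.map f.toHom) (hc.map f.injective) ?_
  intro v hv
  rw [Walk.support_map, List.mem_map] at hv
  obtain ⟨x, hx, rfl⟩ := hv
  rcases hs x hx with h | h
  · exact Or.inl h
  · exact Or.inr (congrArg f h)

theorem IsCycleConvex.image_union_compl_range
    (hf : ∀ u y, K.Adj (f u) y → y ∈ Set.range f) {T : Set V} (hT : IsCycleConvex G T) :
    IsCycleConvex K (f '' T ∪ (Set.range f)ᶜ) := by
  rw [isCycleConvex_iff] at hT ⊢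
  intro w c hc hs
  by_cases hw : w ∈ Set.range f
  · obtain ⟨u, rfl⟩ := hw
    obtain ⟨v, hv, c', rfl⟩ := exists_walk_map_eq f hf c u rfl
    obtain rfl := f.injective hv
    refine Or.inl ⟨v, hT v c' ((Walk.isCycle_map_iff_of_injective f.injective).1 hc) ?_, rfl⟩
    intro x hx
    have hx' : f x ∈ (c'.map f.toHom).support := by
      rw [Walk.support_map]
      exact List.mem_map_of_mem hx
    rcases hs (f x) hx' with (⟨z, hz, hzx⟩ | h) | h
    · exact Or.inl (f.injective hzx ▸ hz)
    · exact absurd ⟨x, rfl⟩ h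
    · exact Or.inr (f.injective h)
  · exact Or.inr hw

theorem preimage_cycleHull (hf : ∀ u y, K.Adj (f u) y → y ∈ Set.range f) (S : Set W) :
    f ⁻¹' cycleHull K S = cycleHull G (f ⁻¹' S) := by
  ext p
  constructor
  · rintro hp T ⟨hST, hT⟩
    have hsub : S ⊆ f '' T ∪ (Set.range f)ᶜ := by
      intro x hx
      by_cases hr : x ∈ Set.range f
      · obtain ⟨u, rfl⟩ := hr
        exact Or.inl ⟨u, hST hx, rfl⟩
      · exact Or.inr hr
    rcases hp _ ⟨hsub, hT.image_union_compl_range f hf⟩ with ⟨z, hz, hzp⟩ | h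
    · exact f.injective hzp ▸ hz
    · exact absurd ⟨p, rfl⟩ h
  · rintro hp T ⟨hST, hT⟩
    exact hp _ ⟨Set.preimage_mono hST, hT.preimage f⟩

theorem CIndep.image (hf : ∀ u y, K.Adj (f u) y → y ∈ Set.range f) {S : Set V}
    (hS : CIndep G S) : CIndep K (f '' S) := by
  obtain ⟨p, hp, hpa⟩ := hS
  refine ⟨f p, ?_, ?_⟩
  · change p ∈ f ⁻¹' cycleHull K (f '' S)
    rwa [preimage_cycleHull f hf, Set.preimage_image_eq _ f.injective]
  · rintro _ ⟨a, ha, rfl⟩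
    change p ∉ f ⁻¹' cycleHull K (f '' S \ {f a})
    rw [← Set.image_singleton, ← Set.image_sdiff f.injective, preimage_cycleHull f hf,
      Set.preimage_image_eq _ f.injective]
    exact hpa a ha

/-- An independent set whose witness lies in the range of `f` comes from an independent set
of `G`. -/
theorem exists_cIndep_image_eq (hf : ∀ u y, K.Adj (f u) y → y ∈ Set.range f) {S : Set W}
    {q : V} (hq : f q ∈ cycleHull K S) (hqa : ∀ a ∈ S, f q ∉ cycleHull K (S \ {a})) :
    ∃ T : Set V, CIndep G T ∧ f '' T = S := by
  have key (R : Set W) : f q ∈ cycleHull K R ↔ q ∈ cycleHull G (f ⁻¹' R) := by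
    rw [← preimage_cycleHull f hf, Set.mem_preimage]
  refine ⟨f ⁻¹' S, ⟨q, (key S).1 hq, ?_⟩, ?_⟩
  · intro a ha h
    refine hqa (f a) ha ((key _).2 ?_)
    rwa [Set.preimage_sdiff, ← Set.image_singleton, Set.preimage_image_eq _ f.injective]
  · rw [Set.image_preimage_eq_iff]
    intro a ha
    by_contra hr
    refine hqa a ha ((key _).2 ?_)
    have : f ⁻¹' (S \ {a}) = f ⁻¹' S := by
      ext x
      have hx : f x ≠ a := fun h => hr ⟨x, h⟩
      simp [hx]
    rw [this]
    exact (key S).1 hq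

end ClosedEmbedding

theorem CIndep.ncard_le_carNumber {V : Type*} [Finite V] {G : SimpleGraph V} {S : Set V}
    (hS : CIndep G S) : S.ncard ≤ carNumber G := by
  refine le_csSup ⟨Nat.card V, ?_⟩ ⟨S, hS, rfl⟩
  rintro _ ⟨T, -, rfl⟩
  exact Set.ncard_le_card T

theorem carNumber_le_iff {V : Type*} [Finite V] {G : SimpleGraph V} {n : ℕ} :
    carNumber G ≤ n ↔ ∀ S : Set V, CIndep G S → S.ncard ≤ n := by
  refine ⟨fun h S hS => hS.ncard_le_carNumber.trans h, fun h => csSup_le' ?_⟩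
  rintro _ ⟨S, hS, rfl⟩
  exact h S hS

theorem carNumber_le_of_embedding {V W : Type*} [Finite V] [Finite W] {G : SimpleGraph V}
    {K : SimpleGraph W} (f : G ↪g K) (hf : ∀ u y, K.Adj (f u) y → y ∈ Set.range f) :
    carNumber G ≤ carNumber K := by
  rw [carNumber_le_iff]
  intro S hS
  rw [← Set.ncard_image_of_injective S f.injective]
  exact (hS.image f hf).ncard_le_carNumber

/-- The Caratheodory number of a disjoint union is the maximum of the
Caratheodory numbers of the two factors. -/
theorem stmt_8 {α β : Type*} [Fintype α] [Fintype β] [Nonempty α] [Nonempty β]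
    (G : SimpleGraph α) (H : SimpleGraph β) :
    carNumber (G ⊕g H) = max (carNumber G) (carNumber H) := by
  let f : G ↪g G ⊕g H := Embedding.sumInl
  let g : H ↪g G ⊕g H := Embedding.sumInr
  have hf : ∀ u y, (G ⊕g H).Adj (f u) y → y ∈ Set.range f := by
    rintro u (y | y) h
    · exact ⟨y, rfl⟩
    · exact absurd h (by simp [f])
  have hg : ∀ u y, (G ⊕g H).Adj (g u) y → y ∈ Set.range g := by
    rintro u (y | y) h
    · exact absurd h (by simp [g])
    · exact ⟨y, rfl⟩
  refine le_antisymm (carNumber_le_iff.2 ?_)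
    (max_le (carNumber_le_of_embedding f hf) (carNumber_le_of_embedding g hg))
  rintro S ⟨q | q, hq, hqa⟩
  · obtain ⟨T, hT, rfl⟩ := exists_cIndep_image_eq f hf hq hqa
    rw [Set.ncard_image_of_injective T f.injective]
    exact hT.ncard_le_carNumber.trans (le_max_left _ _)
  · obtain ⟨T, hT, rfl⟩ := exists_cIndep_image_eq g hg hq hqa
    rw [Set.ncard_image_of_injective T g.injective]
    exact hT.ncard_le_carNumber.trans (le_max_right _ _)
end

section
/- Let G be a finite simple connected split graph, i.e., V(G) can be partitioned into a clique K and an independent set I. Then car(G) ≤ 2. -/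
open SimpleGraph

section CycleConvexity

variable {V : Type*} {G : SimpleGraph V} {S T K I : Set V} {a b w : V}

lemma subset_cycleHull (G : SimpleGraph V) (S : Set V) : S ⊆ cycleHull G S :=
  Set.subset_sInter fun _ hT => hT.1

lemma cycleHull_subset (hST : S ⊆ T) (hT : IsCycleConvex G T) : cycleHull G S ⊆ T :=
  Set.sInter_subset_of_mem ⟨hST, hT⟩

lemma cycleHull_mono (G : SimpleGraph V) (hST : S ⊆ T) : cycleHull G S ⊆ cycleHull G T :=
  Set.subset_sInter fun _ hU => cycleHull_subset (hST.trans hU.1) hU.2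

/-- A cycle convex set contains every vertex forming a triangle with two of its vertices. -/
lemma IsCycleConvex.mem_of_triangle (hT : IsCycleConvex G T) (ha : a ∈ T) (hb : b ∈ T)
    (hab : G.Adj a b) (hwa : G.Adj w a) (hwb : G.Adj w b) : w ∈ T := by
  by_contra hw
  let w' : ↥(T ∪ {w}) := ⟨w, Set.mem_union_right T rfl⟩
  let a' : ↥(T ∪ {w}) := ⟨a, .inl ha⟩
  let b' : ↥(T ∪ {w}) := ⟨b, .inl hb⟩
  have hwa' : (G.induce (T ∪ {w})).Adj w' a' := hwa
  have hab' : (G.induce (T ∪ {w})).Adj a' b' := hab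
  have hbw' : (G.induce (T ∪ {w})).Adj b' w' := hwb.symm
  refine hT w hw ⟨.cons hwa' (.cons hab' (.cons hbw' .nil)), ?_⟩
  simp [Walk.cons_isCycle_iff, Walk.cons_isPath_iff, hab'.ne, hwa'.ne.symm, hbw'.ne]
  exact hbw'.ne.symm

lemma mem_cycleHull_of_triangle (ha : a ∈ cycleHull G S) (hb : b ∈ cycleHull G S)
    (hab : G.Adj a b) (hwa : G.Adj w a) (hwb : G.Adj w b) : w ∈ cycleHull G S :=
  fun _ hT => hT.2.mem_of_triangle (ha _ hT) (hb _ hT) hab hwa hwb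

/-- The second vertex of a cycle through `w` in `S ∪ {w}` lies in `S` and has a neighbour
in `S`. -/
lemma exists_adj_snd
    {c : (G.induce (S ∪ {w})).Walk ⟨w, Set.mem_union_right S rfl⟩
      ⟨w, Set.mem_union_right S rfl⟩} (hc : c.IsCycle) :
    G.Adj w c.snd ∧ (c.snd : V) ∈ S ∧ ∃ y ∈ S, G.Adj c.snd y := by
  have h3 := hc.three_le_length
  have h1 : G.Adj w c.snd := c.adj_snd hc.not_nil
  have h2 : G.Adj c.snd (c.getVert 2) := c.adj_getVert_succ (i := 1) (by omega)
  refine ⟨h1, c.snd.2.resolve_right fun h => h1.ne h.symm, c.getVert 2,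
    (c.getVert 2).2.resolve_right fun h => ?_, h2⟩
  have h0 : c.getVert 2 = c.getVert 0 := by
    rw [Walk.getVert_zero]
    exact Subtype.ext h
  have := hc.getVert_injOn' (by simp; omega) (by simp) h0
  omega

/-- A set that is not cycle convex has two distinct, non-isolated vertices with a common
neighbour outside the set. -/
lemma exists_adj_of_not_isCycleConvex (hS : ¬ IsCycleConvex G S) :
    ∃ w ∉ S, ∃ x ∈ S, ∃ z ∈ S, x ≠ z ∧ G.Adj w x ∧ G.Adj w z ∧
      (∃ y ∈ S, G.Adj x y) ∧ ∃ y ∈ S, G.Adj z y := by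
  simp only [IsCycleConvex, not_forall, not_not] at hS
  obtain ⟨w, hw, c, hc⟩ := hS
  obtain ⟨h1, h2, h3⟩ := exists_adj_snd hc
  obtain ⟨h4, h5, h6⟩ := exists_adj_snd hc.reverse
  refine ⟨w, hw, _, h2, _, h5, fun h => ?_, h1, h4, h3, h6⟩
  rw [Walk.snd_reverse] at h
  exact hc.snd_ne_penultimate (Subtype.ext h)

lemma clique_subset_cycleHull (hK : G.IsClique K) (ha : a ∈ K) (hb : b ∈ K) (hab : a ≠ b)
    (haS : a ∈ cycleHull G S) (hbS : b ∈ cycleHull G S) : K ⊆ cycleHull G S := by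
  intro v hv
  by_cases hva : v = a
  · exact hva ▸ haS
  by_cases hvb : v = b
  · exact hvb ▸ hbS
  exact mem_cycleHull_of_triangle haS hbS (hK ha hb hab) (hK hv ha hva) (hK hv hb hvb)

/-- In a split graph, the clique lies in the hull of two vertices of any nonconvex set. -/
lemma exists_clique_subset_cycleHull_pair (hunion : K ∪ I = Set.univ) (hK : G.IsClique K)
    (hI : ∀ u ∈ I, ∀ v ∈ I, ¬ G.Adj u v) (hS : ¬ IsCycleConvex G S) :
    ∃ a ∈ S, ∃ b ∈ S, K ⊆ cycleHull G {a, b} := by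
  have hKI (v : V) : v ∈ K ∨ v ∈ I := by
    rw [← Set.mem_union, hunion]
    trivial
  have hadj {u v : V} (hu : u ∈ I) (h : G.Adj u v) : v ∈ K :=
    (hKI v).resolve_right fun hv => hI u hu v hv h
  obtain ⟨w, hw, x, hx, z, hz, hxz, hwx, hwz, hx', hz'⟩ := exists_adj_of_not_isCycleConvex hS
  have hind {x : V} (hx : x ∈ S) (hxI : x ∈ I) (hwx : G.Adj w x) (hx' : ∃ y ∈ S, G.Adj x y) :
      ∃ a ∈ S, ∃ b ∈ S, K ⊆ cycleHull G {a, b} := by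
    obtain ⟨y, hy, hxy⟩ := hx'
    have hwK := hadj hxI hwx.symm
    have hyK := hadj hxI hxy
    have hwy : w ≠ y := fun h => hw (h ▸ hy)
    have hxH : x ∈ cycleHull G {x, y} := subset_cycleHull G _ (by simp)
    have hyH : y ∈ cycleHull G {x, y} := subset_cycleHull G _ (by simp)
    exact ⟨x, hx, y, hy, clique_subset_cycleHull hK hwK hyK hwy
      (mem_cycleHull_of_triangle hxH hyH hxy hwx (hK hwK hyK hwy)) hyH⟩
  rcases hKI x with hxK | hxI
  · rcases hKI z with hzK | hzI
    · exact ⟨x, hx, z, hz, clique_subset_cycleHull hK hxK hzK hxz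
        (subset_cycleHull G _ (by simp)) (subset_cycleHull G _ (by simp))⟩
    · exact hind hz hzI hwz hz'
  · exact hind hx hxI hwx hx'

/-- In a split graph, a hull containing the clique contains every hull, up to generators. -/
lemma cycleHull_subset_union (hunion : K ∪ I = Set.univ) (hK : G.IsClique K)
    (hI : ∀ u ∈ I, ∀ v ∈ I, ¬ G.Adj u v) (hT : K ⊆ cycleHull G T) :
    cycleHull G S ⊆ S ∪ cycleHull G T := by
  have hKI (v : V) : v ∈ K ∨ v ∈ I := by
    rw [← Set.mem_union, hunion]
    trivial
  refine cycleHull_subset Set.subset_union_left ?_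
  by_contra hcon
  obtain ⟨w, hw, x, -, z, -, hxz, hwx, hwz, -⟩ := exists_adj_of_not_isCycleConvex hcon
  have hwI : w ∈ I := (hKI w).resolve_left fun h => hw (.inr (hT h))
  have hxK : x ∈ K := (hKI x).resolve_right fun h => hI w hwI x h hwx
  have hzK : z ∈ K := (hKI z).resolve_right fun h => hI w hwI z h hwz
  exact hw (.inr (mem_cycleHull_of_triangle (hT hxK) (hT hzK) (hK hxK hzK hxz) hwx hwz))

end CycleConvexity

/-- A finite connected split graph has Caratheodory number at most 2. -/
theorem stmt_12 {V : Type*} [Fintype V] (G : SimpleGraph V) (hG : G.Connected)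
    (K I : Set V) (hunion : K ∪ I = Set.univ) (hdisj : Disjoint K I)
    (hK : G.IsClique K) (hI : ∀ u ∈ I, ∀ v ∈ I, ¬ G.Adj u v) :
    carNumber G ≤ 2 := by
  refine csSup_le' ?_
  rintro n ⟨S, ⟨p, hp, hpS⟩, rfl⟩
  by_contra! hcard
  have hthird (a b : V) : ∃ c ∈ S, c ∉ ({a, b} : Set V) :=
    Set.exists_mem_notMem_of_ncard_lt_ncard
      (((Set.ncard_insert_le a {b}).trans_eq (by simp)).trans_lt hcard)
  have hpnot : p ∉ S := by
    intro hmem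
    obtain ⟨c, hc, hcp⟩ := hthird p p
    refine hpS c hc (subset_cycleHull G _ ⟨hmem, ?_⟩)
    rintro rfl
    simp at hcp
  by_cases hconv : IsCycleConvex G S
  · exact hpnot (cycleHull_subset subset_rfl hconv hp)
  · obtain ⟨a, ha, b, hb, hab⟩ := exists_clique_subset_cycleHull_pair hunion hK hI hconv
    obtain ⟨c, hc, hcab⟩ := hthird a b
    have hsub : ({a, b} : Set V) ⊆ S \ {c} := by
      intro v hv
      refine ⟨?_, fun h => hcab (h ▸ hv)⟩
      rcases hv with rfl | rfl <;> assumption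
    exact hpS c hc (cycleHull_mono G hsub
      ((cycleHull_subset_union hunion hK hI hab hp).resolve_left hpnot))
end
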